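/- Let n ≥ 1 and let a x : Fin n → ℝ be arbitrary. Then the family indexed by strictly decreasing tuples k : Fin n → ℕ with every value k l odd, with term (∏_{l} (1 / (k l)!)) · D(a, k) · D(x, k), has sum equal to the determinant of the n×n matrix with (i,j) entry Real.sinh (a j * x i). (Determinant form of the hyperbolic sine example, from Theorem 1 with g(x) = sinh x; only partitions in P_{n,odd} contribute.) -/

import Mathlib

/-- A finite product of convergent real series is the sum, over all tuples of indices, of the
products of the corresponding terms. -/
theorem hasSum_pi_prod {ι : Type*} {n : ℕ} {f : Fin n → ι → ℝ} {s : Fin n → ℝ}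
    (h : ∀ i, HasSum (f i) (s i)) :
    HasSum (fun k : Fin n → ι => ∏ i, f i (k i)) (∏ i, s i) := by
  induction n with
  | zero => simp
  | succ n ih =>
    have ht := ih fun i => h i.succ
    have hs := summable_mul_of_summable_norm (h 0).summable.norm ht.summable.norm
    have hm := (h 0).mul ht hs
    rw [← (Fin.consEquiv fun _ => ι).hasSum_iff, Fin.prod_univ_succ]
    refine hm.congr_fun fun p => ?_
    simp [Fin.prod_univ_succ, Fin.consEquiv]

/-- Precomposing strictly decreasing tuples with permutations produces each tuple at most once. -/
theorem injective_strictAnti_comp_perm {ι : Type*} [LinearOrder ι] {n : ℕ} :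
    Function.Injective
      (fun p : {k : Fin n → ι // StrictAnti k} × Equiv.Perm (Fin n) => p.1.1 ∘ p.2) := by
  rintro ⟨⟨k, hk⟩, σ⟩ ⟨⟨k', hk'⟩, σ'⟩ h
  have hr : Set.range k = Set.range k' := by
    rw [← σ.surjective.range_comp k, ← σ'.surjective.range_comp k']
    exact congrArg Set.range h
  obtain rfl : k = k' := by
    have := (StrictMono.range_inj hk.dual_right hk'.dual_right).1
      (by rw [Set.range_comp, Set.range_comp, hr])
    exact funext fun i => OrderDual.toDual.injective (congrFun this i)
  obtain rfl : σ = σ' := Equiv.ext fun i => hk.injective (congrFun h i)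
  rfl

/-- An injective tuple is a rearrangement of a strictly decreasing one. -/
theorem exists_strictAnti_comp_perm {ι : Type*} [LinearOrder ι] {n : ℕ} {k : Fin n → ι}
    (hk : Function.Injective k) :
    ∃ p : {k : Fin n → ι // StrictAnti k} × Equiv.Perm (Fin n), p.1.1 ∘ p.2 = k := by
  let σ := Tuple.sort (OrderDual.toDual ∘ k)
  have hm : Antitone (k ∘ σ) := fun i j hij => Tuple.monotone_sort (OrderDual.toDual ∘ k) hij
  refine ⟨⟨⟨k ∘ σ, hm.strictAnti_of_injective (hk.comp σ.injective)⟩, σ⁻¹⟩, ?_⟩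
  ext i
  simp

/-- The Cauchy–Binet formula for matrices with an arbitrary linearly ordered set of inner
indices. -/
theorem hasSum_det_mul_det {ι : Type*} [LinearOrder ι] {n : ℕ} {A B : Fin n → ι → ℝ}
    {M : Matrix (Fin n) (Fin n) ℝ} (h : ∀ i j, HasSum (fun m => A i m * B j m) (M i j)) :
    HasSum
      (fun k : {k : Fin n → ι // StrictAnti k} =>
        (Matrix.of fun i j => A i (k.1 j)).det * (Matrix.of fun i j => B i (k.1 j)).det)
      M.det := by
  have hall : HasSum
      (fun k : Fin n → ι => (Matrix.of fun i j => A i (k j)).det * ∏ i, B i (k i)) M.det := by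
    rw [Matrix.det_apply']
    have := hasSum_sum (s := Finset.univ) fun (σ : Equiv.Perm (Fin n)) _ =>
      (hasSum_pi_prod fun i => h (σ i) i).mul_left ((Equiv.Perm.sign σ : ℤ) : ℝ)
    refine this.congr_fun fun k => ?_
    simp [Matrix.det_apply', Finset.sum_mul, Finset.prod_mul_distrib, mul_assoc]
  rw [← injective_strictAnti_comp_perm.hasSum_iff] at hall
  · refine (hall.prod_fiberwise fun k => hasSum_fintype _).congr_fun fun k => ?_
    rw [Matrix.det_apply' (Matrix.of fun i j => B i (k.1 j)), Finset.mul_sum,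
      ← Equiv.sum_comp (Equiv.inv (Equiv.Perm (Fin n)))]
    refine Finset.sum_congr rfl fun σ _ => ?_
    have hA := Matrix.det_permute' σ (Matrix.of fun i j => A i (k.1 j))
    have hB : ∏ i, B i (k.1 (σ i)) = ∏ i, B (σ⁻¹ i) (k.1 i) := by
      rw [← Equiv.prod_comp σ fun i => B (σ⁻¹ i) (k.1 i)]
      simp
    simp only [Matrix.submatrix, Matrix.of_apply, id] at hA
    simp only [Function.comp_apply, Equiv.inv_apply, Equiv.Perm.sign_inv, Matrix.of_apply, hB, hA]
    ring
  · intro k hk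
    have hni : ¬ Function.Injective k := fun hi => hk (exists_strictAnti_comp_perm hi)
    obtain ⟨i, j, hij, hne⟩ : ∃ i j, k i = k j ∧ i ≠ j := by
      simpa [Function.Injective] using hni
    rw [Matrix.det_zero_of_column_eq hne (fun l => by simp [hij]), zero_mul]

/-- Strictly decreasing tuples of natural numbers correspond to strictly decreasing tuples of odd
numbers via `m ↦ 2 * m + 1`. -/
def strictAntiEquivOdd (n : ℕ) :
    {k : Fin n → ℕ // StrictAnti k} ≃
      {k : Fin n → ℕ // StrictAnti k ∧ ∀ l : Fin n, Odd (k l)} where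
  toFun k := ⟨fun l => 2 * k.1 l + 1, fun i j hij => by have := k.2 hij; dsimp only; omega,
    fun l => ⟨k.1 l, rfl⟩⟩
  invFun k := ⟨fun l => k.1 l / 2, fun i j hij => by
    have := k.2.1 hij
    obtain ⟨p, hp⟩ := k.2.2 i
    obtain ⟨q, hq⟩ := k.2.2 j
    dsimp only
    omega⟩
  left_inv k := Subtype.ext <| funext fun l => by dsimp only; omega
  right_inv k := Subtype.ext <| funext fun l => by
    obtain ⟨p, hp⟩ := k.2.2 l
    dsimp only
    omega

theorem cauchy_type_identity_sinh
    (n : ℕ) (hn : 1 ≤ n) (a x : Fin n → ℝ) :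
    HasSum
      (fun k : {k : Fin n → ℕ // StrictAnti k ∧ ∀ l : Fin n, Odd (k l)} =>
        (∏ l : Fin n, (1 / (Nat.factorial (k.1 l) : ℝ))) *
          (Matrix.of fun i j : Fin n => (a i) ^ (k.1 j)).det *
          (Matrix.of fun i j : Fin n => (x i) ^ (k.1 j)).det)
      (Matrix.of fun i j : Fin n => Real.sinh (a j * x i)).det := by
  rw [← (strictAntiEquivOdd n).hasSum_iff, ← Matrix.det_transpose]
  have h := hasSum_det_mul_det
    (A := fun i m => 1 / (Nat.factorial (2 * m + 1) : ℝ) * a i ^ (2 * m + 1))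
    (B := fun i m => x i ^ (2 * m + 1))
    (M := (Matrix.of fun i j : Fin n => Real.sinh (a j * x i)).transpose) fun i j => by
      refine (Real.hasSum_sinh (a i * x j)).congr_fun fun m => ?_
      rw [mul_pow]
      ring
  refine h.congr_fun fun k => ?_
  have hdet := Matrix.det_mul_row (fun l => 1 / (Nat.factorial (2 * k.1 l + 1) : ℝ))
    (Matrix.of fun i j => a i ^ (2 * k.1 j + 1))
  simp only [Matrix.of_apply] at hdet
  simp only [hdet, strictAntiEquivOdd, Function.comp_apply, Equiv.coe_fn_mk]
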